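/- There is a constant C > 0, depending only on α, such that for all t with 0 < t ≤ 1/2 one has |K_0^α(t,1)| ≤ C, and for every integer n ≠ 0 and all 0 < t ≤ 1/2 one has |K_n^α(t,1)| ≤ C · t^{|n|−1}. -/

import Mathlib

open Real

/-- Parametrization of the infinite straight cone of opening angle `2α`. -/
noncomputable def coneParam (α t θ : ℝ) : EuclideanSpace ℝ (Fin 3) :=
  !₂[sin α * t * cos θ, sin α * t * sin θ, cos α * t]

/-- Outward unit normal of the cone. -/
noncomputable def coneNormal (α θ : ℝ) : EuclideanSpace ℝ (Fin 3) :=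
  !₂[cos α * cos θ, cos α * sin θ, -sin α]

/-- The layer-potential kernel of the infinite straight cone. -/
noncomputable def coneKernel (α t θ t' θ' : ℝ) : ℝ :=
  (inner ℝ (coneParam α t θ - coneParam α t' θ') (coneNormal α θ) : ℝ) /
    ‖coneParam α t' θ' - coneParam α t θ‖ ^ 3

/-- The `n`-th modal kernel `K_n^α(t,t') = (1/(2π)) ∫₀^{2π} e^{−inθ} K^{Γ_α}(t,θ,t',0) dθ`. -/
noncomputable def modalKernel (α : ℝ) (n : ℤ) (t t' : ℝ) : ℂ :=
  ((1 / (2 * π) : ℝ) : ℂ) *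
    ∫ θ in (0:ℝ)..(2 * π), Complex.exp (-Complex.I * (n : ℂ) * (θ : ℂ)) * (coneKernel α t θ t' 0 : ℂ)

lemma mk_kernel (α t θ : ℝ) :
    coneKernel α t θ 1 0 = sin α * cos α * (1 - cos θ) /
      (1 + t ^ 2 - 2 * t * (cos α ^ 2 + sin α ^ 2 * cos θ)) ^ (3 / 2 : ℝ) := by
  unfold coneKernel
  have hD : ‖coneParam α 1 0 - coneParam α t θ‖ =
      √(1 + t ^ 2 - 2 * t * (cos α ^ 2 + sin α ^ 2 * cos θ)) := by
    rw [EuclideanSpace.norm_eq]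
    congr 1
    simp [coneParam, Fin.sum_univ_three]
    have h1 := sin_sq_add_cos_sq α
    have h2 := sin_sq_add_cos_sq θ
    linear_combination (1 + t ^ 2 - 2 * t * 0) * h1 + (sin α ^ 2 * t ^ 2) * h2
  have hN : inner ℝ (coneParam α t θ - coneParam α 1 0) (coneNormal α θ) =
      sin α * cos α * (1 - cos θ) := by
    simp [coneParam, coneNormal, PiLp.inner_apply, Fin.sum_univ_three]
    have h2 := sin_sq_add_cos_sq θ
    linear_combination (sin α * cos α * t) * h2
  have hnn : 0 ≤ 1 + t ^ 2 - 2 * t * (cos α ^ 2 + sin α ^ 2 * cos θ) := by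
    have h1 := sin_sq_add_cos_sq α
    have : 1 + t ^ 2 - 2 * t * (cos α ^ 2 + sin α ^ 2 * cos θ) =
      cos α ^ 2 * (1 - t) ^ 2 + sin α ^ 2 * ((t - cos θ) ^ 2 + sin θ ^ 2) := by
      have h2 := sin_sq_add_cos_sq θ
      linear_combination (-(1 + t ^ 2)) * h1 - sin α ^ 2 * h2
    rw [this]; positivity
  rw [hN, hD, Real.sqrt_eq_rpow, ← Real.rpow_natCast, ← Real.rpow_mul hnn]
  norm_num

noncomputable def mkD (α t : ℝ) (z : ℂ) : ℂ :=
  1 + (t : ℂ) ^ 2 - 2 * t * ((cos α : ℂ) ^ 2 + (sin α : ℂ) ^ 2 * Complex.cos z)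

noncomputable def mkF (α t : ℝ) (n : ℤ) (z : ℂ) : ℂ :=
  Complex.exp (-Complex.I * (n : ℂ) * z) *
    ((sin α : ℂ) * (cos α : ℂ) * (1 - Complex.cos z) / (mkD α t z) ^ ((3 / 2 : ℝ) : ℂ))

lemma mkD_re (α t : ℝ) (ht : 0 < t) (ht2 : t ≤ 1 / 2) (x y : ℝ)
    (hy : t * cosh y ≤ (1 + t ^ 2) / 2) :
    cos α ^ 2 / 4 ≤ (mkD α t (x + y * Complex.I)).re := by
  have hre : (mkD α t (x + y * Complex.I)).re =
      1 + t ^ 2 - 2 * t * (cos α ^ 2 + sin α ^ 2 * (cos x * cosh y)) := by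
    unfold mkD
    rw [Complex.cos_add_mul_I]
    have : (1 + (t : ℂ) ^ 2 - 2 * t * ((cos α : ℂ) ^ 2 + (sin α : ℂ) ^ 2 *
        (Complex.cos x * Complex.cosh y - Complex.sin x * Complex.sinh y * Complex.I))) =
      ((1 + t ^ 2 - 2 * t * (cos α ^ 2 + sin α ^ 2 * (cos x * cosh y)) : ℝ) : ℂ)
        + ((2 * t * sin α ^ 2 * (sin x * sinh y) : ℝ) : ℂ) * Complex.I := by
      push_cast; ring
    rw [this]; simp only [Complex.add_re, Complex.ofReal_re, Complex.re_ofReal_mul, Complex.I_re]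
    ring
  rw [hre]
  have h1 := sin_sq_add_cos_sq α
  have h3 : t * (cos x * cosh y) ≤ (1 + t ^ 2) / 2 := by
    have : t * (cos x * cosh y) ≤ t * (1 * cosh y) := by
      have := cos_le_one x
      have := cosh_pos y
      gcongr
    linarith
  have h4 := mul_le_mul_of_nonneg_left h3 (sq_nonneg (sin α))
  have h5 : cos α ^ 2 * (1 / 4) ≤ cos α ^ 2 * (1 - t) ^ 2 := by
    apply mul_le_mul_of_nonneg_left _ (sq_nonneg _)
    nlinarith
  have h6 : sin α ^ 2 = 1 - cos α ^ 2 := by linarith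
  nlinarith

lemma mkF_norm (α t : ℝ) (hc : cos α ≠ 0) (ht : 0 < t) (ht2 : t ≤ 1 / 2) (n : ℤ) (x y : ℝ)
    (hy : t * cosh y ≤ (1 + t ^ 2) / 2) :
    ‖mkF α t n (x + y * Complex.I)‖ ≤
      exp (n * y) * ((1 + cosh y) / (cos α ^ 2 / 4) ^ (3 / 2 : ℝ)) := by
  have hD := mkD_re α t ht ht2 x y hy
  have hD2 : cos α ^ 2 / 4 ≤ ‖mkD α t (x + y * Complex.I)‖ := hD.trans (Complex.re_le_norm _)
  have hp : 0 < cos α ^ 2 / 4 := by positivity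
  unfold mkF
  rw [norm_mul, norm_div, Complex.norm_exp, Complex.norm_cpow_real]
  have he : (-Complex.I * (n : ℂ) * (x + y * Complex.I)).re = n * y := by
    simp
  rw [he]
  have hcos : ‖Complex.cos (x + y * Complex.I)‖ ≤ cosh y := by
    rw [Complex.cos_add_mul_I, ← Complex.ofReal_cos, ← Complex.ofReal_sin,
      ← Complex.ofReal_cosh, ← Complex.ofReal_sinh]
    have hq : ‖((cos x : ℝ) : ℂ) * ((cosh y : ℝ) : ℂ) -
        ((sin x : ℝ) : ℂ) * ((sinh y : ℝ) : ℂ) * Complex.I‖ ^ 2 =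
        (cos x * cosh y) ^ 2 + (sin x * sinh y) ^ 2 := by
      rw [Complex.sq_norm, Complex.normSq_apply]
      simp only [Complex.sub_re, Complex.sub_im, Complex.re_ofReal_mul, Complex.im_ofReal_mul,
        Complex.ofReal_re, Complex.ofReal_im, Complex.I_re, Complex.I_im, mul_assoc]
      ring
    rw [← pow_le_pow_iff_left₀ (norm_nonneg _) (cosh_pos y).le two_ne_zero]
    rw [hq]
    have h2 := sin_sq_add_cos_sq x
    have h3 := cosh_sq y
    nlinarith [sq_nonneg (sin x)]
  have hsc : ‖(sin α : ℂ) * (cos α : ℂ) * (1 - Complex.cos (x + y * Complex.I))‖ ≤ 1 + cosh y := by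
    rw [norm_mul, norm_mul, Complex.norm_real, Complex.norm_real]
    have ha : ‖sin α‖ ≤ 1 := abs_sin_le_one α
    have hb : ‖cos α‖ ≤ 1 := abs_cos_le_one α
    have hd : ‖1 - Complex.cos (x + y * Complex.I)‖ ≤ 1 + cosh y := by
      refine (norm_sub_le _ _).trans ?_
      simpa using hcos
    have := mul_le_one₀ ha (norm_nonneg _) hb
    calc _ ≤ 1 * (1 + cosh y) := by gcongr
      _ = _ := one_mul _
  gcongr

lemma mkF_diff (α t : ℝ) (n : ℤ) (z : ℂ) (h : 0 < (mkD α t z).re) :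
    DifferentiableAt ℂ (mkF α t n) z := by
  have hs : mkD α t z ∈ Complex.slitPlane := Or.inl h
  have hD : DifferentiableAt ℂ (mkD α t) z := by unfold mkD; fun_prop
  have h0 : mkD α t z ≠ 0 := Complex.slitPlane_ne_zero hs
  have hP := hD.cpow_const (c := ((3 / 2 : ℝ) : ℂ)) hs
  have h1 : (mkD α t z) ^ ((3 / 2 : ℝ) : ℂ) ≠ 0 := by
    rw [Complex.cpow_ne_zero_iff]; exact Or.inl h0
  unfold mkF
  exact DifferentiableAt.mul (by fun_prop) (DifferentiableAt.div (by fun_prop) hP h1)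

lemma mkF_per (α t : ℝ) (n : ℤ) (z : ℂ) : mkF α t n (2 * π + z) = mkF α t n z := by
  have hc : Complex.cos (2 * π + z) = Complex.cos z := by
    rw [add_comm, Complex.cos_add_two_pi]
  have he : Complex.exp (-Complex.I * (n : ℂ) * (2 * π + z)) =
      Complex.exp (-Complex.I * (n : ℂ) * z) := by
    rw [Complex.exp_eq_exp_iff_exists_int]
    exact ⟨-n, by push_cast; ring⟩
  unfold mkF mkD
  rw [hc, he]

lemma mk_bound (α t : ℝ) (hc : cos α ≠ 0) (ht : 0 < t) (ht2 : t ≤ 1 / 2) (n : ℤ) (y : ℝ)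
    (hy : t * cosh y ≤ (1 + t ^ 2) / 2) :
    ‖modalKernel α n t 1‖ ≤
      exp (n * y) * ((1 + cosh y) / (cos α ^ 2 / 4) ^ (3 / 2 : ℝ)) := by
  have hp : 0 < cos α ^ 2 / 4 := by positivity
  have key : ∀ x y' : ℝ, |y'| ≤ |y| → 0 < (mkD α t (x + y' * Complex.I)).re := by
    intro x y' h
    refine hp.trans_le (mkD_re α t ht ht2 x y' (le_trans ?_ hy))
    have := Real.cosh_le_cosh.2 h
    gcongr
  have h1 : (∫ θ in (0:ℝ)..(2 * π), Complex.exp (-Complex.I * (n : ℂ) * (θ : ℂ)) *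
      (coneKernel α t θ 1 0 : ℂ)) = ∫ θ in (0:ℝ)..(2 * π), mkF α t n θ := by
    congr 1
    ext θ
    have h := key θ 0 (by simp)
    have hd : mkD α t θ =
        ((1 + t ^ 2 - 2 * t * (cos α ^ 2 + sin α ^ 2 * cos θ) : ℝ) : ℂ) := by
      unfold mkD; push_cast; ring
    simp only [Complex.ofReal_zero, zero_mul, add_zero] at h
    rw [hd, Complex.ofReal_re] at h
    rw [mk_kernel]
    unfold mkF
    rw [hd, ← Complex.ofReal_cpow h.le]
    push_cast
    rfl
  have h2 : ∫ θ in (0:ℝ)..(2 * π), mkF α t n θ =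
      ∫ θ in (0:ℝ)..(2 * π), mkF α t n (θ + y * Complex.I) := by
    have := Complex.integral_boundary_rect_eq_zero_of_differentiableOn (mkF α t n) 0
      ((2 * π : ℝ) + y * Complex.I) (by
        intro z hz
        apply DifferentiableAt.differentiableWithinAt
        apply mkF_diff
        rw [← Complex.re_add_im z]
        apply key
        have := (Complex.mem_reProdIm.1 hz).2
        simp at this
        simpa using Set.abs_sub_left_of_mem_uIcc this)
    simp [mkF_per] at this
    exact sub_eq_zero.1 this
  unfold modalKernel
  rw [h1, h2, norm_mul]
  have h3 := intervalIntegral.norm_integral_le_of_norm_le_const (a := 0) (b := 2 * π)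
    (f := fun θ : ℝ => mkF α t n (θ + y * Complex.I))
    (fun θ _ => mkF_norm α t hc ht ht2 n θ y hy)
  have hpi := pi_pos
  rw [sub_zero, abs_of_pos (by positivity)] at h3
  rw [Complex.norm_real, Real.norm_of_nonneg (by positivity)]
  calc _ ≤ _ := mul_le_mul_of_nonneg_left h3 (by positivity)
    _ = _ := by field_simp

/-- Behaviour of the modal kernel near the origin: there is `C > 0`, depending only
on `α`, with `|K_0^α(t,1)| ≤ C` for `0 < t ≤ 1/2`, and `|K_n^α(t,1)| ≤ C t^{|n|−1}`
for `0 < t ≤ 1/2` and `n ≠ 0`. -/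
theorem modalKernel_decay_zero (α : ℝ) (hα0 : 0 < α) (hαπ : α < π) (hα2 : α ≠ π / 2) :
    ∃ C : ℝ, 0 < C ∧
      (∀ t : ℝ, 0 < t → t ≤ 1 / 2 → ‖modalKernel α 0 t 1‖ ≤ C) ∧
      (∀ n : ℤ, n ≠ 0 → ∀ t : ℝ, 0 < t → t ≤ 1 / 2 →
        ‖modalKernel α n t 1‖ ≤ C * t ^ (n.natAbs - 1)) := by
  have hc : cos α ≠ 0 := by
    intro h
    apply hα2
    apply Real.injOn_cos ⟨hα0.le, hαπ.le⟩ ⟨by positivity, by linarith [pi_pos]⟩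
    rw [h, cos_pi_div_two]
  have hp : 0 < (cos α ^ 2 / 4) ^ (3 / 2 : ℝ) := by positivity
  refine ⟨2 / (cos α ^ 2 / 4) ^ (3 / 2 : ℝ), by positivity, ?_, ?_⟩
  · intro t ht ht2
    have := mk_bound α t hc ht ht2 0 0 (by simp; nlinarith [sq_nonneg (1 - t)])
    refine this.trans (le_of_eq ?_)
    simp; norm_num
  · intro n hn t ht ht2
    obtain ⟨y, hch, hexp⟩ : ∃ y : ℝ, cosh y = (t + t⁻¹) / 2 ∧ exp (n * y) = t ^ n.natAbs := by
      have hch := Real.cosh_log ht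
      rcases lt_or_gt_of_ne hn with h | h
      · refine ⟨-log t, by rw [cosh_neg, hch], ?_⟩
        have : (n : ℝ) = -(n.natAbs : ℝ) := by
          rw [Nat.cast_natAbs, abs_of_neg h]; push_cast; ring
        rw [this, neg_mul_neg, mul_comm, Real.exp_mul, exp_log ht, Real.rpow_natCast]
      · refine ⟨log t, hch, ?_⟩
        have : (n : ℝ) = (n.natAbs : ℝ) := by
          rw [Nat.cast_natAbs, abs_of_pos h]
        rw [this, mul_comm, Real.exp_mul, exp_log ht, Real.rpow_natCast]
    have hb := mk_bound α t hc ht ht2 n y (by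
      rw [hch]; apply le_of_eq; field_simp; ring)
    refine hb.trans ?_
    rw [hexp, hch]
    obtain ⟨m, hm⟩ : ∃ m, n.natAbs = m + 1 := ⟨n.natAbs - 1, by omega⟩
    rw [hm, Nat.add_sub_cancel, pow_succ]
    have h2 : t * (1 + (t + t⁻¹) / 2) ≤ 2 := by
      have : t * t⁻¹ = 1 := mul_inv_cancel₀ ht.ne'
      nlinarith
    calc _ = t ^ m * (t * (1 + (t + t⁻¹) / 2)) / (cos α ^ 2 / 4) ^ (3 / 2 : ℝ) := by ring
      _ ≤ t ^ m * 2 / (cos α ^ 2 / 4) ^ (3 / 2 : ℝ) := by gcongr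
      _ = _ := by ring
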